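/- arXiv:1112.5157 — 3 statements merged into one kernel-verified Lean document; each statement's English description precedes it below -/
import Mathlib

section
/- Let G be a connected d-regular graph and let v be a vertex with deg₂(v) ≤ 3 and N₂'(v) = ∅. Then G has at most d + 4 vertices; moreover, if d > 6, then G² is a complete graph. -/
open SimpleGraph

variable {V : Type*}

/-- The set of vertices at distance exactly `i` from `v`. -/
def distSet (G : SimpleGraph V) (v : V) (i : ℕ) : Set V := {u | G.dist v u = i}

/-- `deg₂ v` : the number of vertices at distance exactly 2 from `v`. -/
noncomputable def deg2 (G : SimpleGraph V) (v : V) : ℕ := (distSet G v 2).ncard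

/-- `N₂'(v)` : vertices at distance 2 from `v` that are adjacent to a vertex at
distance 3 from `v`. -/
def N2' (G : SimpleGraph V) (v : V) : Set V :=
  {u | G.dist v u = 2 ∧ ∃ w, G.dist v w = 3 ∧ G.Adj u w}

/-- The square of `G` : an edge between `u` and `v` whenever `1 ≤ d(u,v) ≤ 2`. -/
def graphSquare (G : SimpleGraph V) : SimpleGraph V where
  Adj u v := 1 ≤ G.dist u v ∧ G.dist u v ≤ 2
  symm := by
    refine ⟨?_⟩
    intro u v h
    rwa [SimpleGraph.dist_comm]
  loopless := by
    refine ⟨?_⟩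
    intro v h
    simp [SimpleGraph.dist_self] at h

/-- `G` is `d`-regular : every vertex has exactly `d` neighbors. -/
def IsRegularGraph (G : SimpleGraph V) (d : ℕ) : Prop :=
  ∀ v, (G.neighborSet v).ncard = d

/-- The vertex set of the connected component of `G - u` containing `v` :
all vertices reachable from `v` by a walk avoiding `u`. -/
def compDel (G : SimpleGraph V) (u v : V) : Set V :=
  {w | ∃ p : G.Walk v w, u ∉ p.support}

/-!
As no edge leads from distance 2 to distance 3, connectedness puts every vertex within distance 2
of `v`, so the order of `G` is `1 + d + deg₂ v`. Two vertices at distance at least 3 have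
disjoint closed neighbourhoods, which together hold `2 (d + 1)` vertices; this is too many as soon
as `deg₂ v ≤ d`.
-/

section

variable {G : SimpleGraph V} {v x y : V} {d k : ℕ}

theorem dist_le_of_forall_adj_dist_ne (hconn : G.Connected)
    (h : ∀ u w, G.dist v u = k → G.Adj u w → G.dist v w ≠ k + 1) (w : V) : G.dist v w ≤ k := by
  induction (reachable_iff_reflTransGen v w).mp (hconn v w) with
  | refl => simp
  | @tail u w _ huw hu =>
    have hstep := huw.diff_dist_adj (u := v)
    have hleave : G.dist v u = k → G.dist v w ≠ k + 1 := fun hk => h u w hk huw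
    omega

theorem dist_le_two_of_N2'_eq_empty (hconn : G.Connected) (hN : N2' G v = ∅) (w : V) :
    G.dist v w ≤ 2 :=
  dist_le_of_forall_adj_dist_ne hconn
    (fun _ w hu huw hw => Set.eq_empty_iff_forall_notMem.mp hN _ ⟨hu, w, hw, huw⟩) w

theorem distSet_two_subset_biUnion_neighborSet :
    distSet G v 2 ⊆ ⋃ u ∈ G.neighborSet v, G.neighborSet u := by
  intro w (hw : G.dist v w = 2)
  have hreach : G.Reachable v w := .of_dist_ne_zero (by omega)
  have hedist : G.edist v w = 2 := by rw [← hreach.coe_dist_eq_edist, hw, Nat.cast_ofNat]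
  obtain ⟨-, -, u, hvu, hwu⟩ := edist_eq_two_iff.mp hedist
  exact Set.mem_biUnion hvu hwu.symm

theorem finite_distSet_two (hfin : ∀ u, (G.neighborSet u).Finite) (v : V) :
    (distSet G v 2).Finite :=
  ((hfin v).biUnion fun u _ => hfin u).subset distSet_two_subset_biUnion_neighborSet

theorem mem_ball_two_iff_dist_le_one (hconn : G.Connected) : x ∈ G.ball v 2 ↔ G.dist v x ≤ 1 := by
  rw [mem_ball, edist_comm, ← (hconn v x).coe_dist_eq_edist, ← Nat.cast_ofNat, Nat.cast_lt,
    Nat.lt_succ_iff]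

theorem compl_ball_two_eq_distSet_two (hconn : G.Connected) (hdist : ∀ w, G.dist v w ≤ 2) :
    (G.ball v 2)ᶜ = distSet G v 2 := by
  ext w
  have hw := hdist w
  rw [Set.mem_compl_iff, mem_ball_two_iff_dist_le_one hconn, distSet, Set.mem_ofPred_eq]
  omega

theorem finite_ball_two (hfin : (G.neighborSet v).Finite) : (G.ball v 2).Finite := by
  rw [ball_two]
  exact hfin.insert v

theorem ncard_ball_two (hfin : (G.neighborSet v).Finite) :
    (G.ball v 2).ncard = (G.neighborSet v).ncard + 1 := by
  rw [ball_two, Set.ncard_insert_of_notMem G.notMem_neighborSet_self hfin]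

theorem finite_of_forall_dist_le_two (hconn : G.Connected)
    (hfin : ∀ u, (G.neighborSet u).Finite) (hdist : ∀ w, G.dist v w ≤ 2) : Finite V := by
  rw [← Set.finite_univ_iff, ← Set.union_compl_self (G.ball v 2),
    compl_ball_two_eq_distSet_two hconn hdist]
  exact (finite_ball_two (hfin v)).union (finite_distSet_two hfin v)

theorem card_eq_ncard_neighborSet_add_deg2 [Finite V] (hconn : G.Connected)
    (hdist : ∀ w, G.dist v w ≤ 2) :
    Nat.card V = (G.neighborSet v).ncard + 1 + deg2 G v := by
  rw [← ncard_ball_two (Set.toFinite _), deg2, ← compl_ball_two_eq_distSet_two hconn hdist,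
    Set.ncard_add_ncard_compl]

-- Balls are open and distances are integers: hence the `+ 1`.
theorem disjoint_ball_of_add_le_edist_add_one {r s : ℕ∞} (h : r + s ≤ G.edist x y + 1) :
    Disjoint (G.ball x r) (G.ball y s) := by
  rw [Set.disjoint_left]
  intro z (hx : G.edist z x < r) (hy : G.edist z y < s)
  have htri : G.edist x y ≤ G.edist z x + G.edist z y := by
    rw [edist_comm (u := z) (v := x)]
    exact SimpleGraph.edist_triangle
  have hfinite : G.edist x y + 1 < ⊤ :=
    ENat.add_lt_top.mpr ⟨htri.trans_lt (ENat.add_lt_top.mpr ⟨hx.lt_top, hy.lt_top⟩),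
      ENat.one_lt_top⟩
  have hle : G.edist x y + 1 + 1 ≤ G.edist x y + 1 := calc
    G.edist x y + 1 + 1 ≤ G.edist z x + G.edist z y + 1 + 1 := by gcongr
    _ = (G.edist z x + 1) + (G.edist z y + 1) := by ring
    _ ≤ r + s := add_le_add (Order.add_one_le_of_lt hx) (Order.add_one_le_of_lt hy)
    _ ≤ G.edist x y + 1 := h
  exact ((ENat.add_one_le_iff hfinite.ne).mp hle).false

theorem dist_le_two_of_card_lt [Finite V] (hconn : G.Connected)
    (h : Nat.card V < (G.ball x 2).ncard + (G.ball y 2).ncard) : G.dist x y ≤ 2 := by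
  by_contra! hxy
  have hedist : (2 + 2 : ℕ∞) ≤ G.edist x y + 1 := by
    rw [← (hconn x y).coe_dist_eq_edist]
    exact_mod_cast Nat.succ_le_succ hxy
  have hunion := Set.ncard_union_eq (disjoint_ball_of_add_le_edist_add_one hedist)
  have hle := Set.ncard_le_card (G.ball x 2 ∪ G.ball y 2)
  omega

theorem graphSquare_eq_top_of_forall_dist_le_two (hconn : G.Connected)
    (hdist : ∀ x y, G.dist x y ≤ 2) : graphSquare G = ⊤ :=
  eq_top_iff.mpr fun x y hxy => ⟨hconn.pos_dist_of_ne hxy, hdist x y⟩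

theorem graphSquare_eq_top_of_card_lt [Finite V] (hconn : G.Connected)
    (hdeg : ∀ u, d ≤ (G.neighborSet u).ncard) (hcard : Nat.card V < 2 * (d + 1)) :
    graphSquare G = ⊤ := by
  refine graphSquare_eq_top_of_forall_dist_le_two hconn fun x y => dist_le_two_of_card_lt hconn ?_
  rw [ncard_ball_two (Set.toFinite _), ncard_ball_two (Set.toFinite _)]
  have hx := hdeg x
  have hy := hdeg y
  omega

end

-- `ncard` is 0 on infinite sets, so `IsRegularGraph G 0` allows infinite degrees.
theorem stmt2_general {V : Type*} (G : SimpleGraph V) (d : ℕ) (hconn : G.Connected)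
    (hfin : ∀ u, (G.neighborSet u).Finite) (hreg : IsRegularGraph G d)
    (v : V) (hN : N2' G v = ∅) :
    Finite V ∧ Nat.card V = d + 1 + deg2 G v ∧ (deg2 G v ≤ d → graphSquare G = ⊤) := by
  have hdist := dist_le_two_of_N2'_eq_empty hconn hN
  have hV : Finite V := finite_of_forall_dist_le_two hconn hfin hdist
  have hcard : Nat.card V = d + 1 + deg2 G v := by
    rw [card_eq_ncard_neighborSet_add_deg2 hconn hdist, hreg v]
  refine ⟨hV, hcard, fun hd => ?_⟩
  exact graphSquare_eq_top_of_card_lt hconn (fun u => (hreg u).ge) (by omega)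

/-- If `G` is connected and `d`-regular, and `v` satisfies `deg₂(v) ≤ 3`
and `N₂'(v) = ∅`, then `G` has at most `d + 4` vertices; moreover if `d > 6` then `G²`
is complete. -/
theorem stmt2 {V : Type*} [Fintype V] (G : SimpleGraph V) (d : ℕ)
    (hconn : G.Connected) (hreg : IsRegularGraph G d)
    (v : V) (hv : deg2 G v ≤ 3) (hN : N2' G v = ∅) :
    Fintype.card V ≤ d + 4 ∧ (6 < d → graphSquare G = ⊤) := by
  obtain ⟨-, hcard, hsquare⟩ := stmt2_general G d hconn (fun _ => Set.toFinite _) hreg v hN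
  exact ⟨by rw [← Nat.card_eq_fintype_card]; omega, fun hd => hsquare (by omega)⟩
end

section
/- Let d > 6, let G be a connected d-regular graph such that G² is not complete, and let R be a region of G containing a vertex v with deg₂(v) ≤ 3. Then (1) R contains at least d + 1 vertices, and (2) R ⊆ {v} ∪ N(v) ∪ N₂(v). -/
open SimpleGraph

variable {V : Type*}

/-- One step of the equivalence relation generating regions : both vertices are low degree
(`deg₂ ≤ 3`) and they are within distance 2 of each other. -/
def regStep (G : SimpleGraph V) (a b : V) : Prop :=
  deg2 G a ≤ 3 ∧ deg2 G b ≤ 3 ∧ G.Reachable a b ∧ G.dist a b ≤ 2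

/-- A region : an equivalence class of low-degree vertices under chains of `regStep`,
together with all neighbors of vertices of the class. -/
def IsRegion (G : SimpleGraph V) (R : Set V) : Prop :=
  ∃ x₀, deg2 G x₀ ≤ 3 ∧
    R = {y | Relation.ReflTransGen (regStep G) x₀ y} ∪
        {y | ∃ x, Relation.ReflTransGen (regStep G) x₀ x ∧ G.Adj x y}

/-!
Write `N[x]` for the closed neighborhood `G.ball x 2` and `B(x)` for `G.ball x 3`, the vertices at
distance at most two from `x`; Mathlib's balls are open. If `b ∈ N[x]`, then `N[b] ⊆ B(x)`, and as
all closed neighborhoods have `d + 1` elements, the set `B(x) \ N[b]` has exactly `deg₂ x` elements.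
If part of the region of a low-degree vertex `v` lay outside `B(v)`, then the `d + 1` elements of a
well-chosen closed neighborhood would be spread over two or three such differences, which are too
small to hold them.
-/

section Balls

variable {G : SimpleGraph V} {b v x y : V}

lemma mem_ball_three_iff_inter_nonempty :
    x ∈ G.ball y 3 ↔ (G.ball x 2 ∩ G.ball y 2).Nonempty := by
  have le_two_iff : x ∈ G.ball y 3 ↔ ¬ 2 < G.edist x y := by
    rw [mem_ball, not_lt, ← two_add_one_eq_three, ENat.lt_add_one_iff (by simp)]
  rw [le_two_iff, two_lt_edist_iff, ball_two, ball_two]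
  constructor
  · intro h
    by_cases hxy : x = y
    · exact ⟨x, by simp [hxy]⟩
    by_cases hadj : G.Adj x y
    · exact ⟨x, by simp [hadj.symm]⟩
    obtain ⟨z, hz⟩ := Set.nonempty_iff_ne_empty.mpr fun hempty ↦ h ⟨hxy, hadj, hempty⟩
    exact ⟨z, .inr hz.1, .inr hz.2⟩
  · rintro ⟨z, rfl | hxz, rfl | hyz⟩ ⟨hne, hnadj, hempty⟩
    · exact hne rfl
    · exact hnadj hyz.symm
    · exact hnadj hxz
    · exact Set.notMem_empty z (hempty ▸ ⟨hxz, hyz⟩)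

lemma disjoint_ball_two_of_notMem_ball_three (h : x ∉ G.ball y 3) :
    Disjoint (G.ball x 2) (G.ball y 2) := by
  rwa [mem_ball_three_iff_inter_nonempty, Set.not_nonempty_iff_eq_empty,
    ← Set.disjoint_iff_inter_eq_empty] at h

lemma ball_two_subset_ball_three (h : b ∈ G.ball x 2) : G.ball b 2 ⊆ G.ball x 3 :=
  fun _ ht ↦ mem_ball_three_iff_inter_nonempty.mpr ⟨b, mem_ball_comm.mp ht, h⟩

lemma mem_ball_three_iff_reachable_and_dist_le :
    x ∈ G.ball v 3 ↔ G.Reachable v x ∧ G.dist v x ≤ 2 := by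
  rw [mem_ball_comm, mem_ball, ← two_add_one_eq_three, ENat.lt_add_one_iff (by simp)]
  constructor
  · intro h
    have hr : G.Reachable v x := reachable_of_edist_ne_top (ne_top_of_le_ne_top (by simp) h)
    rw [← hr.coe_dist_eq_edist] at h
    exact ⟨hr, mod_cast h⟩
  · rintro ⟨hr, h⟩
    rw [← hr.coe_dist_eq_edist]
    exact mod_cast h

lemma ball_three_eq_ball_two_union_distSet : G.ball v 3 = G.ball v 2 ∪ distSet G v 2 := by
  ext x
  rw [mem_ball_three_iff_reachable_and_dist_le, ball_two]
  constructor
  · rintro ⟨hr, h⟩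
    obtain h0 | h1 | h2 : G.dist v x = 0 ∨ G.dist v x = 1 ∨ G.dist v x = 2 := by omega
    · exact .inl (.inl (hr.dist_eq_zero_iff.mp h0).symm)
    · exact .inl (.inr (dist_eq_one_iff_adj.mp h1))
    · exact .inr h2
  · rintro ((rfl | hadj) | h2)
    · simp
    · exact ⟨hadj.reachable, (dist_eq_one_iff_adj.mpr hadj).trans_le one_le_two⟩
    · have h2 : G.dist v x = 2 := h2
      exact ⟨.of_dist_ne_zero (by omega), h2.le⟩

lemma disjoint_ball_two_distSet : Disjoint (G.ball v 2) (distSet G v 2) := by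
  rw [ball_two, Set.disjoint_left]
  rintro x (rfl | hadj) (h2 : G.dist _ _ = 2)
  · simp at h2
  · simp [dist_eq_one_iff_adj.mpr hadj] at h2

end Balls

namespace IsRegularGraph

variable {G : SimpleGraph V} {d : ℕ} {b v x y : V} {S : Set V}

lemma finite_ball_two (hreg : IsRegularGraph G d) (hd : d ≠ 0) (v : V) : (G.ball v 2).Finite := by
  rw [ball_two]
  exact (Set.finite_of_ncard_ne_zero (by rwa [hreg v])).insert v

lemma ncard_ball_two (hreg : IsRegularGraph G d) (hd : d ≠ 0) (v : V) :
    (G.ball v 2).ncard = d + 1 := by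
  have hfin : (G.neighborSet v).Finite := Set.finite_of_ncard_ne_zero (by rwa [hreg v])
  rw [ball_two, Set.ncard_insert_of_notMem (by simp) hfin, hreg v]

lemma finite_ball_three (hreg : IsRegularGraph G d) (hd : d ≠ 0) (v : V) :
    (G.ball v 3).Finite := by
  refine ((hreg.finite_ball_two hd v).biUnion fun b _ ↦ hreg.finite_ball_two hd b).subset ?_
  intro x hx
  obtain ⟨b, hxb, hvb⟩ := mem_ball_three_iff_inter_nonempty.mp hx
  exact Set.mem_biUnion hvb (mem_ball_comm.mp hxb)

lemma ncard_ball_three (hreg : IsRegularGraph G d) (hd : d ≠ 0) (v : V) :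
    (G.ball v 3).ncard = d + 1 + deg2 G v := by
  have hfin := hreg.finite_ball_three hd v
  rw [ball_three_eq_ball_two_union_distSet] at hfin ⊢
  rw [Set.ncard_union_eq disjoint_ball_two_distSet (hfin.subset Set.subset_union_left)
    (hfin.subset Set.subset_union_right), hreg.ncard_ball_two hd, deg2]

lemma ncard_le_deg2_of_subset (hreg : IsRegularGraph G d) (hd : d ≠ 0) (hb : b ∈ G.ball x 2)
    (hS : S ⊆ G.ball x 3 \ G.ball b 2) : S.ncard ≤ deg2 G x := by
  have hfin := hreg.finite_ball_three hd x
  have hle := Set.ncard_le_ncard hS hfin.sdiff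
  have hsum := Set.ncard_sdiff_add_ncard_of_subset (ball_two_subset_ball_three hb) hfin
  rw [hreg.ncard_ball_two hd, hreg.ncard_ball_three hd] at hsum
  omega

lemma ball_two_subset_ball_three_of_mem_ball_three (hreg : IsRegularGraph G d) (hd : d ≠ 0)
    (hx : x ∈ G.ball v 3) (hdeg : deg2 G v + deg2 G x ≤ d) : G.ball x 2 ⊆ G.ball v 3 := by
  intro t htx
  by_contra htv
  obtain ⟨w, hxw, hvw⟩ := mem_ball_three_iff_inter_nonempty.mp hx
  have hdisj := disjoint_ball_two_of_notMem_ball_three htv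
  have near : (G.ball t 2 ∩ G.ball w 2).ncard ≤ deg2 G v :=
    hreg.ncard_le_deg2_of_subset hd (mem_ball_self (by simp)) fun s hs ↦
      ⟨ball_two_subset_ball_three hvw hs.2, hdisj.notMem_of_mem_left hs.1⟩
  have far : (G.ball t 2 \ G.ball w 2).ncard ≤ deg2 G x :=
    hreg.ncard_le_deg2_of_subset hd hxw
      (Set.sdiff_subset_sdiff_left (ball_two_subset_ball_three htx))
  have split := Set.ncard_inter_add_ncard_sdiff_eq_ncard (G.ball t 2) (G.ball w 2)
    (hreg.finite_ball_two hd t)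
  rw [hreg.ncard_ball_two hd] at split
  omega

lemma mem_ball_three_trans (hreg : IsRegularGraph G d) (hd : d ≠ 0)
    (hx : x ∈ G.ball v 3) (hy : y ∈ G.ball x 3)
    (hdeg_vx : deg2 G v + deg2 G x ≤ d) (hdeg_xy : deg2 G x + deg2 G y ≤ d)
    (hdeg : deg2 G v + deg2 G x + deg2 G y ≤ d + 2) : y ∈ G.ball v 3 := by
  by_contra hyv
  obtain ⟨z, hyz, hxz⟩ := mem_ball_three_iff_inter_nonempty.mp hy
  have hxv_subset : G.ball x 2 ⊆ G.ball v 3 :=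
    hreg.ball_two_subset_ball_three_of_mem_ball_three hd hx hdeg_vx
  have hxy_subset : G.ball x 2 ⊆ G.ball y 3 :=
    hreg.ball_two_subset_ball_three_of_mem_ball_three hd (mem_ball_comm.mp hy) (by omega)
  have hy_notMem : y ∉ G.ball x 2 := fun h ↦ hyv (hxv_subset h)
  have hv_notMem : v ∉ G.ball x 2 := fun h ↦ hyv (mem_ball_comm.mp (hxy_subset h))
  have hdisj := disjoint_ball_two_of_notMem_ball_three hyv
  have hfin := hreg.finite_ball_two hd z
  -- `x` and `v` are themselves counted by `deg₂ y` and `deg₂ x`: this is where `d + 2` comes from.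
  have near : (G.ball z 2 ∩ G.ball v 2).ncard + 1 ≤ deg2 G y := by
    rw [← Set.ncard_insert_of_notMem (fun h ↦ hv_notMem (mem_ball_comm.mp h.2))
      (hfin.inter_of_left _)]
    exact hreg.ncard_le_deg2_of_subset hd (mem_ball_self (by simp)) <| Set.insert_subset
      ⟨mem_ball_comm.mp hy, fun h ↦ hy_notMem (mem_ball_comm.mp h)⟩
      fun s hs ↦ ⟨ball_two_subset_ball_three hyz hs.1, hdisj.notMem_of_mem_right hs.2⟩
  have middle : ((G.ball z 2 \ G.ball v 2) ∩ G.ball v 3).ncard ≤ deg2 G v :=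
    hreg.ncard_le_deg2_of_subset hd (mem_ball_self (by simp)) fun s hs ↦ ⟨hs.2, hs.1.2⟩
  have far : ((G.ball z 2 \ G.ball v 2) \ G.ball v 3).ncard + 1 ≤ deg2 G x := by
    rw [← Set.ncard_insert_of_notMem (fun h ↦ h.2 (mem_ball_self (by simp))) hfin.sdiff.sdiff]
    exact hreg.ncard_le_deg2_of_subset hd (mem_ball_self (by simp)) <| Set.insert_subset
      ⟨mem_ball_comm.mp hx, hv_notMem⟩
      fun s hs ↦ ⟨ball_two_subset_ball_three hxz hs.1.1, fun h ↦ hs.2 (hxv_subset h)⟩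
  have split := Set.ncard_inter_add_ncard_sdiff_eq_ncard (G.ball z 2) (G.ball v 2) hfin
  have split_far := Set.ncard_inter_add_ncard_sdiff_eq_ncard (G.ball z 2 \ G.ball v 2) (G.ball v 3)
    hfin.sdiff
  rw [hreg.ncard_ball_two hd] at split
  omega

end IsRegularGraph

section Regions

variable {G : SimpleGraph V} {d : ℕ} {R : Set V} {v x y : V}

lemma regStep_iff : regStep G x y ↔ deg2 G x ≤ 3 ∧ deg2 G y ≤ 3 ∧ y ∈ G.ball x 3 := by
  rw [regStep, mem_ball_three_iff_reachable_and_dist_le]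

lemma regStep_symm (h : regStep G x y) : regStep G y x := by
  rw [regStep_iff] at h ⊢
  exact ⟨h.2.1, h.1, mem_ball_comm.mp h.2.2⟩

lemma deg2_le_three_of_reflTransGen_regStep (hv : deg2 G v ≤ 3)
    (h : Relation.ReflTransGen (regStep G) v x) : deg2 G x ≤ 3 := by
  obtain rfl | ⟨_, _, hstep⟩ := h.cases_tail
  · exact hv
  · exact hstep.2.1

lemma IsRegion.mem_iff (hR : IsRegion G R) (hvR : v ∈ R) (hv : deg2 G v ≤ 3) :
    y ∈ R ↔ ∃ x, Relation.ReflTransGen (regStep G) v x ∧ y ∈ G.ball x 2 := by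
  obtain ⟨x₀, hx₀, rfl⟩ := hR
  have hvx₀ : Relation.ReflTransGen (regStep G) x₀ v := by
    obtain h | ⟨x, hx, hadj⟩ := hvR
    · exact h
    · refine hx.tail (regStep_iff.mpr ⟨deg2_le_three_of_reflTransGen_regStep hx₀ hx, hv, ?_⟩)
      exact ball_two_subset_ball_three (mem_ball_self (by simp)) (ball_two ▸ .inr hadj)
  have : Std.Symm (regStep G) := ⟨fun _ _ ↦ regStep_symm⟩
  have hclass (x : V) :
      Relation.ReflTransGen (regStep G) x₀ x ↔ Relation.ReflTransGen (regStep G) v x :=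
    ⟨(symm_of _ hvx₀).trans, hvx₀.trans⟩
  simp only [ball_two, Set.mem_union, Set.mem_ofPred_eq, Set.mem_insert_iff, mem_neighborSet,
    hclass]
  constructor
  · rintro (h | ⟨x, hx, hadj⟩)
    · exact ⟨y, h, .inl rfl⟩
    · exact ⟨x, hx, .inr hadj⟩
  · rintro ⟨x, hx, rfl | hadj⟩
    · exact .inl hx
    · exact .inr ⟨x, hx, hadj⟩

lemma IsRegularGraph.mem_ball_three_of_reflTransGen_regStep (hreg : IsRegularGraph G d)
    (hd : 6 < d) (hv : deg2 G v ≤ 3) (h : Relation.ReflTransGen (regStep G) v x) :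
    x ∈ G.ball v 3 := by
  induction h with
  | refl => exact mem_ball_self (by simp)
  | tail _ hstep ih =>
    obtain ⟨hx, hy, hxy⟩ := regStep_iff.mp hstep
    exact hreg.mem_ball_three_trans (by omega) ih hxy (by omega) (by omega) (by omega)

end Regions

theorem stmt3_general (G : SimpleGraph V) (d : ℕ) (hd : 6 < d) (hreg : IsRegularGraph G d)
    (R : Set V) (hR : IsRegion G R) (v : V) (hvR : v ∈ R) (hv : deg2 G v ≤ 3) :
    d + 1 ≤ R.ncard ∧ R ⊆ {v} ∪ G.neighborSet v ∪ distSet G v 2 := by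
  have hd0 : d ≠ 0 := by omega
  have ball_two_subset : G.ball v 2 ⊆ R := fun _ hy ↦ (hR.mem_iff hvR hv).mpr ⟨v, .refl, hy⟩
  have subset_ball_three : R ⊆ G.ball v 3 := by
    intro y hy
    obtain ⟨x, hvx, hxy⟩ := (hR.mem_iff hvR hv).mp hy
    have hx : deg2 G x ≤ 3 := deg2_le_three_of_reflTransGen_regStep hv hvx
    have hxv : x ∈ G.ball v 3 := hreg.mem_ball_three_of_reflTransGen_regStep hd hv hvx
    exact hreg.ball_two_subset_ball_three_of_mem_ball_three hd0 hxv (by omega) hxy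
  constructor
  · rw [← hreg.ncard_ball_two hd0 v]
    exact Set.ncard_le_ncard ball_two_subset
      ((hreg.finite_ball_three hd0 v).subset subset_ball_three)
  · rwa [ball_three_eq_ball_two_union_distSet, ball_two, Set.insert_eq] at subset_ball_three

/-- Let `d > 6`, `G` connected `d`-regular with `G²` not complete, and let
`R` be a region containing a vertex `v` with `deg₂(v) ≤ 3`. Then `R` has at least `d + 1`
vertices and `R ⊆ {v} ∪ N(v) ∪ N₂(v)`. -/
theorem stmt3 {V : Type*} [Fintype V] (G : SimpleGraph V) (d : ℕ) (hd : 6 < d)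
    (hconn : G.Connected) (hreg : IsRegularGraph G d) (hnotcomplete : graphSquare G ≠ ⊤)
    (R : Set V) (hR : IsRegion G R) (v : V) (hvR : v ∈ R) (hv : deg2 G v ≤ 3) :
    d + 1 ≤ R.ncard ∧ R ⊆ {v} ∪ G.neighborSet v ∪ distSet G v 2 :=
  stmt3_general G d hd hreg R hR v hvR hv
end

section
/- Let d > 6 and let G be a connected d-regular graph such that G² is not complete. If R and R' are distinct regions of G, then R and R' are disjoint. -/
open SimpleGraph

variable {V : Type*}

section Region

variable {G : SimpleGraph V} {a b u v y : V}

instance regStep.stdSymm : Std.Symm (regStep G) where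
  symm _ _ := fun ⟨ha, hb, hreach, hdist⟩ ↦ ⟨hb, ha, hreach.symm, dist_comm ▸ hdist⟩

theorem regStep.of_walks_length_le_one (hu : deg2 G u ≤ 3) (hv : deg2 G v ≤ 3)
    (p : G.Walk u y) (hp : p.length ≤ 1) (q : G.Walk v y) (hq : q.length ≤ 1) :
    regStep G u v := by
  let w := p.append q.reverse
  have hw : w.length ≤ 2 := by
    rw [Walk.length_append, Walk.length_reverse]
    lia
  exact ⟨hu, hv, w.reachable, (dist_le w).trans hw⟩

theorem deg2_le_three_of_reflTransGen (ha : deg2 G a ≤ 3)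
    (h : Relation.ReflTransGen (regStep G) a b) : deg2 G b ≤ 3 := by
  obtain rfl | ⟨_, _, hstep⟩ := h.cases_tail
  · exact ha
  · exact hstep.2.1

/-- The region generated by `a`: the `regStep`-class of `a` together with its neighbors. The union
is written as in `IsRegion`, so that the regions of `G` are by definition the sets `regionOf G a`
with `deg2 G a ≤ 3`. -/
def regionOf (G : SimpleGraph V) (a : V) : Set V :=
  {y | Relation.ReflTransGen (regStep G) a y} ∪
    {y | ∃ x, Relation.ReflTransGen (regStep G) a x ∧ G.Adj x y}

theorem exists_walk_length_le_one_of_mem_regionOf (hy : y ∈ regionOf G a) :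
    ∃ x, Relation.ReflTransGen (regStep G) a x ∧ ∃ p : G.Walk x y, p.length ≤ 1 := by
  rcases hy with hy | ⟨x, hx, hadj⟩
  · exact ⟨y, hy, Walk.nil, zero_le_one⟩
  · exact ⟨x, hx, hadj.toWalk, hadj.length_toWalk.le⟩

theorem regionOf_eq_of_reflTransGen (h : Relation.ReflTransGen (regStep G) a b) :
    regionOf G a = regionOf G b := by
  have same_class (x : V) :
      Relation.ReflTransGen (regStep G) a x ↔ Relation.ReflTransGen (regStep G) b x :=
    ⟨(symm h).trans, h.trans⟩
  simp only [regionOf, same_class]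

theorem reflTransGen_of_mem_regionOf (ha : deg2 G a ≤ 3) (hb : deg2 G b ≤ 3)
    (hya : y ∈ regionOf G a) (hyb : y ∈ regionOf G b) :
    Relation.ReflTransGen (regStep G) a b := by
  obtain ⟨u, hau, p, hp⟩ := exists_walk_length_le_one_of_mem_regionOf hya
  obtain ⟨v, hbv, q, hq⟩ := exists_walk_length_le_one_of_mem_regionOf hyb
  have hu : deg2 G u ≤ 3 := deg2_le_three_of_reflTransGen ha hau
  have hv : deg2 G v ≤ 3 := deg2_le_three_of_reflTransGen hb hbv
  have huv : regStep G u v := .of_walks_length_le_one hu hv p hp q hq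
  exact (hau.tail huv).trans (symm hbv)

end Region

-- `Set.ncard` of an infinite set is `0`, so a vertex with infinitely many vertices at distance 2
-- has `deg2 = 0` and may generate a region here.
theorem stmt5_general {V : Type*} (G : SimpleGraph V) (R R' : Set V)
    (hR : IsRegion G R) (hR' : IsRegion G R') (hne : R ≠ R') : Disjoint R R' := by
  obtain ⟨a, ha, rfl⟩ := hR
  obtain ⟨b, hb, rfl⟩ := hR'
  refine Set.disjoint_left.mpr fun y hya hyb ↦ hne ?_
  exact regionOf_eq_of_reflTransGen (reflTransGen_of_mem_regionOf ha hb hya hyb)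

/-- Let `d > 6` and `G` connected `d`-regular with `G²` not complete.
Distinct regions of `G` are disjoint. -/
theorem stmt5 {V : Type*} [Fintype V] (G : SimpleGraph V) (d : ℕ) (hd : 6 < d)
    (hconn : G.Connected) (hreg : IsRegularGraph G d) (hnotcomplete : graphSquare G ≠ ⊤)
    (R R' : Set V) (hR : IsRegion G R) (hR' : IsRegion G R') (hne : R ≠ R') :
    Disjoint R R' := by
  exact stmt5_general G R R' hR hR' hne
end
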